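/- Let B denote the family of all connected graphs in which every block is a complete graph of odd order. Every connected graph G of odd order n ≥ 3 that does not belong to B contains a proper 1-perfect forest. -/

import Mathlib

open SimpleGraph

/-- The degree of `v` in `F`, defined via `Set.ncard` so that no decidability
instances are needed. -/
noncomputable def fdeg {V : Type*} (F : SimpleGraph V) (v : V) : ℕ :=
  (F.neighborSet v).ncard

/-- `F` is a semiperfect spanning forest of `G`: `F` is a spanning subgraph of `G`
that is a forest, and every connected component of `F` is an induced subgraph of `G`. -/
def IsSemiperfectForest {V : Type*} (G F : SimpleGraph V) : Prop :=
  F ≤ G ∧ F.IsAcyclic ∧ ∀ x y : V, F.Reachable x y → G.Adj x y → F.Adj x y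

/-- `s` is (the vertex set of) a block of `G`: the induced subgraph on `s` is connected,
has no cut-vertex, and `s` is maximal with these properties. -/
def IsGraphBlock {V : Type*} (G : SimpleGraph V) (s : Set V) : Prop :=
  (G.induce s).Connected ∧
  (∀ x ∈ s, (G.induce (s \ {x})).Preconnected) ∧
  ∀ t : Set V, s ⊆ t → (G.induce t).Connected →
    (∀ x ∈ t, (G.induce (t \ {x})).Preconnected) → t = s

/-- `G` belongs to the family `B` of connected graphs in which every block is a
complete graph of odd order. -/
def InFamilyB {V : Type*} (G : SimpleGraph V) : Prop :=
  G.Connected ∧ ∀ s : Set V, IsGraphBlock G s →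
    (∀ x ∈ s, ∀ y ∈ s, x ≠ y → G.Adj x y) ∧ Odd s.ncard

/-!
Among all spanning subgraphs of `G` with exactly one vertex of even degree, take one, `F`, with the
fewest edges, and let `v` be its even vertex. Deleting a cycle, or replacing a path by a chord of
`G`, preserves all degree parities and removes edges, so `F` is a semiperfect forest. If `G` has no
proper 1-perfect forest, then `v` is isolated in `F`. For a neighbour `w` of `v`, the graph
`F + vw` has even vertex `w` and just one edge more, and it can only fail to be semiperfect through
a triangle `v w w'` where `w'` is the sole `F`-neighbour of `w`. Hence `F - ww' + vw'` is again
minimal, with even vertex `w`: the even vertex slides along any walk of `G`, and edges of `F` away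
from the walk survive. Sliding shows that two neighbours of `y` joined by a path avoiding `y` are
adjacent, so every block `s` is complete; and for `v ∈ s` the minimal graph with even vertex `v`
matches `s \ {v}` perfectly, so `s` is odd.
-/

open scoped symmDiff

section Parity

variable {V : Type*}

/-- The vertices of odd degree, the boundary of the edge set mod 2: symmetric differences of graphs
turn into symmetric differences of these sets. A vertex of infinite degree is not counted. -/
def oddVertices (F : SimpleGraph V) : Set V := {v | Odd (fdeg F v)}

lemma mem_oddVertices {F : SimpleGraph V} {v : V} :
    v ∈ oddVertices F ↔ Odd (fdeg F v) := Iff.rfl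

lemma oddVertices_bot : oddVertices (⊥ : SimpleGraph V) = ∅ := by
  ext v
  simp [mem_oddVertices, fdeg]

lemma oddVertices_edge {x y : V} (hxy : x ≠ y) :
    oddVertices (edge x y) = {x} ∆ {y} := by
  ext v
  have hnbr : (edge x y).neighborSet v = {u | (v = x ∧ u = y ∨ v = y ∧ u = x)} := by
    ext u
    simp only [mem_neighborSet, edge_adj, Set.mem_ofPred_eq]
    grind
  rw [mem_oddVertices, fdeg, hnbr, Set.mem_symmDiff]
  by_cases hvx : v = x
  · simp [hvx, hxy]
  · by_cases hvy : v = y <;> simp [hvx, hvy, hxy.symm]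

lemma odd_ncard_symmDiff {α : Type*} [Finite α] (s t : Set α) :
    Odd (s ∆ t).ncard ↔ ¬ (Odd s.ncard ↔ Odd t.ncard) := by
  have hunion : (s ∆ t).ncard = (s \ t).ncard + (t \ s).ncard :=
    Set.ncard_union_eq disjoint_sdiff_sdiff
  have hs := Set.ncard_inter_add_ncard_sdiff_eq_ncard s t
  have ht := Set.ncard_inter_add_ncard_sdiff_eq_ncard t s
  rw [Set.inter_comm] at ht
  simp only [Nat.odd_iff]
  omega

variable [Finite V]

lemma oddVertices_symmDiff (F K : SimpleGraph V) :
    oddVertices (F ∆ K) = oddVertices F ∆ oddVertices K := by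
  ext v
  have hnbr : (F ∆ K).neighborSet v = F.neighborSet v ∆ K.neighborSet v := by
    ext u
    simp [symmDiff_def]
  simp only [Set.mem_symmDiff, mem_oddVertices, fdeg, hnbr, odd_ncard_symmDiff]
  tauto

lemma oddVertices_sdiff {F K : SimpleGraph V} (hKF : K ≤ F) :
    oddVertices (F \ K) = oddVertices F ∆ oddVertices K := by
  rw [← oddVertices_symmDiff, symmDiff_of_ge hKF]

lemma oddVertices_sup_edge {F : SimpleGraph V} {x y : V} (hxy : x ≠ y) (hF : ¬ F.Adj x y) :
    oddVertices (F ⊔ edge x y) = oddVertices F ∆ ({x} ∆ {y}) := by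
  have hdisj : Disjoint F (edge x y) := by
    rwa [disjoint_edge]
  rw [← hdisj.symmDiff_eq_sup, oddVertices_symmDiff, oddVertices_edge hxy]

lemma oddVertices_sdiff_edge {F : SimpleGraph V} {x y : V} (hF : F.Adj x y) :
    oddVertices (F \ edge x y) = oddVertices F ∆ ({x} ∆ {y}) := by
  rw [oddVertices_sdiff ((edge_le_iff _).2 (.inr hF)), oddVertices_edge hF.ne]

lemma oddVertices_toSubgraph_of_isTrail {G : SimpleGraph V} {x y : V} {p : G.Walk x y}
    (hp : p.IsTrail) : oddVertices p.toSubgraph.spanningCoe = {x} ∆ {y} := by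
  induction p with
  | nil =>
    rw [symmDiff_self, Set.bot_eq_empty, ← oddVertices_bot]
    congr 1
  | @cons x z y hxz p ih =>
    rw [Walk.isTrail_cons] at hp
    have hcons :
        (Walk.cons hxz p).toSubgraph.spanningCoe = p.toSubgraph.spanningCoe ⊔ edge x z := by
      ext a b
      simp only [Subgraph.spanningCoe_adj, Walk.adj_toSubgraph_iff_mem_edges, sup_adj, edge_adj,
        Walk.edges_cons, List.mem_cons, Sym2.eq_iff]
      have := hxz.ne
      grind
    have hnadj : ¬ p.toSubgraph.spanningCoe.Adj x z := by
      rw [Subgraph.spanningCoe_adj, Walk.adj_toSubgraph_iff_mem_edges]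
      exact hp.2
    rw [hcons, oddVertices_sup_edge hxz.ne hnadj, ih hp.1, symmDiff_comm, symmDiff_assoc,
      symmDiff_symmDiff_cancel_left]

lemma exists_le_oddVertices_eq {G : SimpleGraph V} (hG : G.Preconnected) (T : Finset V)
    (hT : Even T.card) : ∃ F ≤ G, oddVertices F = T := by
  classical
  induction T using Finset.strongInduction with
  | H T ih =>
    obtain rfl | ⟨a, ha⟩ := T.eq_empty_or_nonempty
    · exact ⟨⊥, bot_le, by simp [oddVertices_bot]⟩
    obtain ⟨b, hb⟩ : (T.erase a).Nonempty := by
      rw [← Finset.card_pos, Finset.card_erase_of_mem ha]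
      have := Finset.card_pos.2 ⟨a, ha⟩
      grind
    have hcard : Even ((T.erase a).erase b).card := by
      have h₁ := Finset.card_erase_add_one ha
      have h₂ := Finset.card_erase_add_one hb
      grind
    obtain ⟨F, hFG, hF⟩ := ih _ ((Finset.erase_ssubset hb).trans (Finset.erase_ssubset ha)) hcard
    obtain ⟨p, hp⟩ := (hG a b).exists_isPath
    refine ⟨F ∆ p.toSubgraph.spanningCoe,
      symmDiff_le_sup.trans (sup_le hFG p.toSubgraph.spanningCoe_le), ?_⟩
    rw [oddVertices_symmDiff, hF, oddVertices_toSubgraph_of_isTrail hp.isTrail]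
    ext u
    simp only [Set.mem_symmDiff, Finset.mem_coe, Finset.mem_erase, Set.mem_singleton_iff]
    grind

end Parity

section Shortening

variable {V : Type*} {G F : SimpleGraph V}

lemma three_le_length_or_exists_edges_eq {x y : V} (p : F.Walk x y) (hne : x ≠ y)
    (hF : ¬ F.Adj x y) :
    3 ≤ p.length ∨ p.length = 2 ∧ ∃ z, p.edges = [s(x, z), s(z, y)] :=
  match p with
  | .nil => absurd rfl hne
  | .cons hxy .nil => absurd hxy hF
  | .cons _ (.cons _ .nil) => .inr ⟨rfl, _, rfl⟩
  | .cons _ (.cons _ (.cons _ _)) => .inl (by simp)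

lemma ncard_edgeSet_sup_edge_le (F : SimpleGraph V) (x y : V) :
    (F ⊔ edge x y).edgeSet.ncard ≤ F.edgeSet.ncard + 1 := by
  rw [edgeSet_sup]
  refine (Set.ncard_union_le _ _).trans (Nat.add_le_add_left ?_ _)
  exact (Set.ncard_le_ncard edgeSet_edge_subset).trans (Set.ncard_singleton _).le

variable [Finite V]

lemma ncard_edgeSet_sdiff_trail_add_length {x y : V} {p : F.Walk x y} (hp : p.IsTrail) :
    (F \ p.toSubgraph.spanningCoe).edgeSet.ncard + p.length = F.edgeSet.ncard := by
  classical
  have hlen : p.edgeSet.ncard = p.length := by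
    rw [← Walk.coe_edges_toFinset, Set.ncard_coe_finset,
      List.toFinset_card_of_nodup hp.edges_nodup, Walk.length_edges]
  rw [edgeSet_sdiff, Subgraph.edgeSet_spanningCoe, Walk.edgeSet_toSubgraph, ← hlen]
  exact Set.ncard_sdiff_add_ncard_of_subset fun _ he => p.edges_subset_edgeSet he

lemma exists_fewer_edges_of_not_isAcyclic (hFG : F ≤ G) (hF : ¬ F.IsAcyclic) :
    ∃ F' ≤ G, oddVertices F' = oddVertices F ∧ F'.edgeSet.ncard + 2 ≤ F.edgeSet.ncard := by
  simp only [IsAcyclic, not_forall, not_not] at hF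
  obtain ⟨x, c, hc⟩ := hF
  refine ⟨F \ c.toSubgraph.spanningCoe, sdiff_le.trans hFG, ?_, ?_⟩
  · rw [oddVertices_sdiff c.toSubgraph.spanningCoe_le,
      oddVertices_toSubgraph_of_isTrail hc.isTrail, symmDiff_self, symmDiff_bot]
  · have := ncard_edgeSet_sdiff_trail_add_length hc.isTrail
    have := hc.three_le_length
    omega

lemma exists_path_replaced_by_chord (hFG : F ≤ G) {x y : V} {p : F.Walk x y} (hp : p.IsPath)
    (hxy : G.Adj x y) (hF : ¬ F.Adj x y) :
    ∃ F' ≤ G, oddVertices F' = oddVertices F ∧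
      F'.edgeSet.ncard + p.length ≤ F.edgeSet.ncard + 1 ∧ F \ p.toSubgraph.spanningCoe ≤ F' := by
  refine ⟨F \ p.toSubgraph.spanningCoe ⊔ edge x y,
    sup_le (sdiff_le.trans hFG) ((edge_le_iff _).2 (.inr hxy)), ?_, ?_, le_sup_left⟩
  · have hnadj : ¬ (F \ p.toSubgraph.spanningCoe).Adj x y := fun h => hF h.1
    rw [oddVertices_sup_edge hxy.ne hnadj,
      oddVertices_sdiff p.toSubgraph.spanningCoe_le,
      oddVertices_toSubgraph_of_isTrail hp.isTrail, symmDiff_symmDiff_cancel_right]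
  · have := ncard_edgeSet_sdiff_trail_add_length hp.isTrail
    have := ncard_edgeSet_sup_edge_le (F \ p.toSubgraph.spanningCoe) x y
    omega

lemma exists_fewer_edges_of_not_isSemiperfectForest (hFG : F ≤ G)
    (hF : ¬ IsSemiperfectForest G F) :
    ∃ F' ≤ G, oddVertices F' = oddVertices F ∧
      (F'.edgeSet.ncard + 2 ≤ F.edgeSet.ncard ∨
        F'.edgeSet.ncard + 1 ≤ F.edgeSet.ncard ∧
          ∃ x z y, G.Adj x y ∧ F \ (edge x z ⊔ edge z y) ≤ F') := by
  by_cases hacyc : F.IsAcyclic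
  · obtain ⟨x, y, hreach, hxy, hnadj⟩ :
        ∃ x y, F.Reachable x y ∧ G.Adj x y ∧ ¬ F.Adj x y := by
      simpa [IsSemiperfectForest, hFG, hacyc] using hF
    obtain ⟨p, hp⟩ := hreach.exists_isPath
    obtain ⟨F', hF'G, hodd, hcard, hle⟩ := exists_path_replaced_by_chord hFG hp hxy hnadj
    refine ⟨F', hF'G, hodd, ?_⟩
    obtain hlong | ⟨htwo, z, hz⟩ := three_le_length_or_exists_edges_eq p hxy.ne hnadj
    · exact .inl (by omega)
    · have hpath : p.toSubgraph.spanningCoe ≤ edge x z ⊔ edge z y := by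
        intro a b hab
        have hne := hab.ne
        rw [Subgraph.spanningCoe_adj, Walk.adj_toSubgraph_iff_mem_edges, hz] at hab
        simpa [edge_adj, hne] using hab
      exact .inr ⟨by omega, x, z, y, hxy, (sdiff_le_sdiff_left hpath).trans hle⟩
  · obtain ⟨F', hF'G, hodd, hcard⟩ := exists_fewer_edges_of_not_isAcyclic hFG hacyc
    exact ⟨F', hF'G, hodd, .inl hcard⟩

end Shortening

/-- `G` contains a proper 1-perfect forest. -/
def HasProperOnePerfectForest {V : Type*} (G : SimpleGraph V) : Prop :=
  ∃ F : SimpleGraph V, IsSemiperfectForest G F ∧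
    (∃! v : V, Even (fdeg F v)) ∧ ∀ v : V, 0 < fdeg F v

lemma hasProperOnePerfectForest_of_oddVertices_eq {V : Type*} [Finite V] {G F : SimpleGraph V}
    {v w : V} (hF : IsSemiperfectForest G F) (hodd : oddVertices F = {v}ᶜ) (hvw : F.Adj v w) :
    HasProperOnePerfectForest G := by
  have hiff (u : V) : Odd (fdeg F u) ↔ u ≠ v := by
    rw [← mem_oddVertices, hodd, Set.mem_compl_singleton_iff]
  refine ⟨F, hF, ⟨v, ?_, fun u hu => ?_⟩, fun u => ?_⟩
  · simp [← Nat.not_odd_iff_even, hiff]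
  · simpa [← Nat.not_odd_iff_even, hiff] using hu
  · by_cases huv : u = v
    · subst huv
      exact (Set.ncard_pos).2 ⟨w, hvw⟩
    · exact ((hiff u).2 huv).pos

/-- `F` is a spanning subgraph of `G` whose only vertex of even degree is `v`, and no spanning
subgraph with exactly one vertex of even degree, at `v` or elsewhere, has fewer edges. -/
structure IsMinOddExcept {V : Type*} (G F : SimpleGraph V) (v : V) : Prop where
  le : F ≤ G
  oddVertices_eq : oddVertices F = {v}ᶜ
  ncard_le : ∀ ⦃F' v'⦄, F' ≤ G → oddVertices F' = {v'}ᶜ → F.edgeSet.ncard ≤ F'.edgeSet.ncard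

lemma exists_isMinOddExcept {V : Type*} [Fintype V] {G : SimpleGraph V} (hG : G.Connected)
    (hV : Odd (Fintype.card V)) : ∃ F v, IsMinOddExcept G F v := by
  classical
  obtain ⟨r⟩ := hG.nonempty
  let S : Set (SimpleGraph V) := {F | F ≤ G ∧ ∃ v, oddVertices F = {v}ᶜ}
  have hS : S.Nonempty := by
    obtain ⟨F, hFG, hF⟩ := exists_le_oddVertices_eq hG.preconnected (Finset.univ.erase r)
      (by simpa using hV.tsub_odd odd_one)
    exact ⟨F, hFG, r, by simpa [Set.compl_eq_univ_sdiff] using hF⟩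
  obtain ⟨F, ⟨hFG, v, hF⟩, hmin⟩ :=
    Set.exists_min_image S (fun F => F.edgeSet.ncard) S.toFinite hS
  exact ⟨F, v, hFG, hF, fun F' v' hF'G hF' => hmin F' ⟨hF'G, v', hF'⟩⟩

namespace IsMinOddExcept

variable {V : Type*} {G F : SimpleGraph V} {v : V}

lemma of_ncard_le (hF : IsMinOddExcept G F v) {F' : SimpleGraph V} {w : V} (hle : F' ≤ G)
    (hodd : oddVertices F' = {w}ᶜ) (hcard : F'.edgeSet.ncard ≤ F.edgeSet.ncard) :
    IsMinOddExcept G F' w :=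
  ⟨hle, hodd, fun _ _ hle' hodd' => hcard.trans (hF.ncard_le hle' hodd')⟩

lemma exists_adj (hF : IsMinOddExcept G F v) {w : V} (hwv : w ≠ v) : ∃ w', F.Adj w w' := by
  have hw : w ∈ oddVertices F := by simpa [hF.oddVertices_eq] using hwv
  exact Set.nonempty_of_ncard_ne_zero hw.pos.ne'

variable [Finite V]

lemma isSemiperfectForest (hF : IsMinOddExcept G F v) : IsSemiperfectForest G F := by
  by_contra hsemi
  obtain ⟨F', hle, hodd, hcard⟩ := exists_fewer_edges_of_not_isSemiperfectForest hF.le hsemi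
  have := hF.ncard_le hle (hodd.trans hF.oddVertices_eq)
  omega

lemma not_adj (hF : IsMinOddExcept G F v) (hG : ¬ HasProperOnePerfectForest G) (u : V) :
    ¬ F.Adj v u :=
  fun hvu => hG <|
    hasProperOnePerfectForest_of_oddVertices_eq hF.isSemiperfectForest hF.oddVertices_eq hvu

lemma exists_chorded_path_of_adj (hF : IsMinOddExcept G F v)
    (hG : ¬ HasProperOnePerfectForest G) {w : V} (hvw : G.Adj v w) :
    ∃ x z y, G.Adj x y ∧ ∀ t, (F ⊔ edge v w).Adj w t → (edge x z ⊔ edge z y).Adj w t := by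
  have hle : F ⊔ edge v w ≤ G := sup_le hF.le ((edge_le_iff _).2 (.inr hvw))
  have hodd : oddVertices (F ⊔ edge v w) = {w}ᶜ := by
    rw [oddVertices_sup_edge hvw.ne (hF.not_adj hG w), hF.oddVertices_eq, ← symmDiff_assoc,
      compl_symmDiff_self, top_symmDiff, hnot_eq_compl]
  have hnot : ¬ IsSemiperfectForest G (F ⊔ edge v w) := fun hsemi => hG <|
    hasProperOnePerfectForest_of_oddVertices_eq (w := v) hsemi hodd (by simp [edge_adj, hvw.ne'])
  obtain ⟨F', hle', hodd', hcard⟩ := exists_fewer_edges_of_not_isSemiperfectForest hle hnot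
  have hsup := ncard_edgeSet_sup_edge_le F v w
  have hmin := hF.ncard_le hle' (hodd'.trans hodd)
  obtain hcard | ⟨hcard, x, z, y, hxy, hsub⟩ := hcard
  · omega
  have hF' : IsMinOddExcept G F' w := hF.of_ncard_le hle' (hodd'.trans hodd) (by omega)
  refine ⟨x, z, y, hxy, fun t ht => ?_⟩
  by_contra hnadj
  exact hF'.not_adj hG t (hsub ⟨ht, hnadj⟩)

lemma exists_neighborSet_eq_singleton (hF : IsMinOddExcept G F v)
    (hG : ¬ HasProperOnePerfectForest G) {w : V} (hvw : G.Adj v w) :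
    ∃ w', G.Adj v w' ∧ F.neighborSet w = {w'} := by
  obtain ⟨w', hww'⟩ := hF.exists_adj hvw.ne'
  obtain ⟨x, z, y, hxy, hcover⟩ := hF.exists_chorded_path_of_adj hG hvw
  have hne_v {t : V} (ht : F.Adj w t) : t ≠ v := by
    rintro rfl
    exact hF.not_adj hG w ht.symm
  have hv := hcover v (by simp [edge_adj, hvw.ne'])
  have hnbr (t : V) (ht : F.Adj w t) := hcover t (.inl ht)
  simp only [sup_adj, edge_adj] at hv hnbr
  -- `wv` and `ww'` are distinct edges of the path `x z y`, so its middle vertex is `w`.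
  have hpath : z = w ∧ (x = v ∧ y = w' ∨ x = w' ∧ y = v) := by
    have := hnbr w' hww'
    have := hne_v hww'
    have := hxy.ne
    grind
  refine ⟨w', ?_, Set.eq_singleton_iff_unique_mem.2 ⟨hww', fun t ht => ?_⟩⟩
  · obtain ⟨-, ⟨rfl, rfl⟩ | ⟨rfl, rfl⟩⟩ := hpath
    exacts [hxy, hxy.symm]
  · have := hnbr t ht
    have := hne_v ht
    grind

lemma slide (hF : IsMinOddExcept G F v) (hG : ¬ HasProperOnePerfectForest G) {w w' : V}
    (hww' : F.Adj w w') (hvw' : G.Adj v w') :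
    IsMinOddExcept G (F \ edge w w' ⊔ edge v w') w := by
  refine hF.of_ncard_le (sup_le (sdiff_le.trans hF.le) ((edge_le_iff _).2 (.inr hvw'))) ?_ ?_
  · have hnadj : ¬ (F \ edge w w').Adj v w' := fun h => hF.not_adj hG w' h.1
    rw [oddVertices_sup_edge hvw'.ne hnadj, oddVertices_sdiff_edge hww', hF.oddVertices_eq]
    ext u
    have := hww'.ne
    have := hvw'.ne
    simp only [Set.mem_symmDiff, Set.mem_compl_iff, Set.mem_singleton_iff]
    grind
  · refine (ncard_edgeSet_sup_edge_le _ v w').trans ?_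
    rw [edgeSet_sdiff, edgeSet_edge_of_ne hww'.ne]
    exact (Set.ncard_sdiff_singleton_add_one (F.mem_edgeSet.2 hww')).le

lemma exists_of_walk (hG : ¬ HasProperOnePerfectForest G) {u z : V} (p : G.Walk u z)
    (hF : IsMinOddExcept G F u) :
    ∃ F', IsMinOddExcept G F' z ∧
      ∀ a ∉ p.support, ∀ b ∉ p.support, F.Adj a b → F'.Adj a b := by
  induction p generalizing F with
  | nil => exact ⟨F, hF, fun _ _ _ _ => id⟩
  | @cons u w z huw p ih =>
    obtain ⟨w', huw', hw⟩ := hF.exists_neighborSet_eq_singleton hG huw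
    obtain ⟨F', hF', hkeep⟩ := ih (hF.slide hG (hw.ge rfl) huw')
    refine ⟨F', hF', fun a ha b hb hab => ?_⟩
    rw [Walk.support_cons, List.mem_cons, not_or] at ha hb
    refine hkeep a ha.2 b hb.2 (.inl ⟨hab, fun hedge => ?_⟩)
    have := p.start_mem_support
    rw [edge_adj] at hedge
    grind

lemma adj_of_walk (hF : IsMinOddExcept G F v) (hG : ¬ HasProperOnePerfectForest G) {x y z : V}
    (hyx : F.Adj y x) (p : G.Walk v z) (hy : y ∉ p.support) (hx : x ∉ p.support)
    (hzy : G.Adj z y) : G.Adj z x := by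
  obtain ⟨F', hF', hkeep⟩ := hF.exists_of_walk hG p
  obtain ⟨y', hzy', hnbr⟩ := hF'.exists_neighborSet_eq_singleton hG hzy
  obtain rfl : x = y' := hnbr.le (hkeep y hy x hx hyx)
  exact hzy'

lemma adj_of_walk_avoiding (hF : IsMinOddExcept G F v) (hG : ¬ HasProperOnePerfectForest G)
    {x z : V} (hvx : G.Adj v x) (hvz : G.Adj v z) (hxz : x ≠ z) (p : G.Walk z x)
    (hv : v ∉ p.support) : G.Adj z x := by
  classical
  obtain ⟨x', hvx', hnbr⟩ := hF.exists_neighborSet_eq_singleton hG hvx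
  have hxx' : F.Adj x x' := hnbr.ge rfl
  -- It suffices to reach `z` from `x'` without meeting `v` or `x`: slide the even vertex to `x'`,
  -- which creates the edge `vx`, and then along that walk.
  suffices ∃ q : G.Walk x' z, v ∉ q.support ∧ x ∉ q.support by
    obtain ⟨q, hvq, hxq⟩ := this
    exact (hF.slide hG hxx'.symm hvx).adj_of_walk hG (.inr (by simp [edge_adj, hvx.ne])) q hvq hxq
      hvz.symm
  have hvp : v ∉ p.bypass.support := fun h => hv (p.support_bypass_subset_support h)
  by_cases hx' : x' ∈ p.bypass.support
  · refine ⟨(p.bypass.takeUntil x' hx').reverse, ?_, ?_⟩ <;>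
      rw [Walk.support_reverse, List.mem_reverse]
    · exact fun h => hvp (p.bypass.support_takeUntil_subset_support hx' h)
    · exact Walk.endpoint_notMem_support_takeUntil p.bypass_isPath hx' hxx'.ne
  · have hzx' : G.Adj z x' := (hF.slide hG hxx' hvx').adj_of_walk hG
      (.inr (by simp [edge_adj, hvx'.ne])) p.bypass.reverse (by simpa using hvp)
      (by simpa using hx') hvz.symm
    exact ⟨hzx'.symm.toWalk, by simp [hvx'.ne, hvz.ne], by simp [hxx'.ne, hxz]⟩

end IsMinOddExcept

section Blocks

variable {V : Type*} {G : SimpleGraph V} {s : Set V}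

lemma isClique_of_preconnected_induce_sdiff (hs : (G.induce s).Preconnected)
    (hcut : ∀ y ∈ s, (G.induce (s \ {y})).Preconnected)
    (hadj : ∀ ⦃y x z⦄, G.Adj y x → G.Adj y z → x ≠ z → ∀ p : G.Walk z x, y ∉ p.support →
      G.Adj z x) : G.IsClique s := by
  intro x hx y hy hxy
  have hstar (b : s) (hb : (G.induce s).Reachable ⟨x, hx⟩ b) : b.1 ≠ x → G.Adj x b := by
    rw [reachable_iff_reflTransGen] at hb
    induction hb with
    | refl => exact fun h => absurd rfl h
    | @tail c d _ hcd ih =>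
      intro hdx
      have hcd : G.Adj c d := hcd
      by_cases hcx : c.1 = x
      · rwa [← hcx]
      have hxc : x ∈ s \ {c.1} := ⟨hx, Ne.symm hcx⟩
      have hdc : d.1 ∈ s \ {c.1} := ⟨d.2, hcd.ne'⟩
      obtain ⟨p⟩ := hcut c c.2 ⟨x, hxc⟩ ⟨d, hdc⟩
      have havoid : c.1 ∉ (p.map (Embedding.induce _).toHom).support := by
        rw [Walk.support_map, List.mem_map]
        rintro ⟨a, -, ha⟩
        exact a.2.2 ha
      exact hadj hcd (ih hcx).symm hdx _ havoid
  exact hstar ⟨y, hy⟩ (hs _ _) hxy.symm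

lemma connected_induce_insert (hs : (G.induce s).Preconnected) {a w : V} (ha : a ∈ s)
    (haw : G.Adj a w) : (G.induce (insert w s)).Connected := by
  have hpair := (induce_pair_connected_of_adj haw).preconnected
  have hunion : s ∪ {a, w} = insert w s := by grind
  rw [← hunion]
  exact induce_union_connected hs hpair ⟨a, ha, by simp⟩

lemma IsGraphBlock.mem_of_adj_of_adj (hs : IsGraphBlock G s) {a b w : V} (ha : a ∈ s) (hb : b ∈ s)
    (hab : a ≠ b) (haw : G.Adj a w) (hbw : G.Adj b w) : w ∈ s := by
  obtain ⟨hconn, hcut, hmax⟩ := hs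
  by_contra hw
  refine hw ((hmax (insert w s) (Set.subset_insert _ _)
    (connected_induce_insert hconn.preconnected ha haw) fun x hx => ?_) ▸ Set.mem_insert w s)
  obtain rfl | hxs := hx
  · rw [Set.insert_sdiff_self_of_notMem hw]
    exact hconn.preconnected
  · obtain ⟨c, hcs, hcx, hcw⟩ : ∃ c ∈ s, c ≠ x ∧ G.Adj c w := by
      by_cases hax : a = x
      · exact ⟨b, hb, fun h => hab (hax.trans h.symm), hbw⟩
      · exact ⟨a, ha, hax, haw⟩
    have hwx : w ∉ ({x} : Set V) := by
      rintro rfl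
      exact hw hxs
    rw [Set.insert_sdiff_of_notMem _ hwx]
    exact (connected_induce_insert (hcut x hxs) ⟨hcs, hcx⟩ hcw).preconnected

lemma IsGraphBlock.odd_ncard [Finite V] (hs : IsGraphBlock G s) (hclique : G.IsClique s)
    (hG : ¬ HasProperOnePerfectForest G) {F : SimpleGraph V} {v : V} (hv : v ∈ s)
    (hF : IsMinOddExcept G F v) : Odd s.ncard := by
  have hmatch : ((⊤ : F.Subgraph).induce (s \ {v})).IsMatching := by
    intro w hw
    have hvw : G.Adj v w := hclique hv hw.1 (Ne.symm hw.2)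
    obtain ⟨w', hvw', hnbr⟩ := hF.exists_neighborSet_eq_singleton hG hvw
    have hww' : F.Adj w w' := hnbr.ge rfl
    have hw's : w' ∈ s := hs.mem_of_adj_of_adj hv hw.1 hvw.ne hvw' (hF.le hww')
    exact ⟨w', ⟨hw, ⟨hw's, hvw'.ne'⟩, hww'⟩, fun t ht => hnbr.le ht.2.2⟩
  have heven : Even (s \ {v}).ncard := by
    have := Fintype.ofFinite ↥((⊤ : F.Subgraph).induce (s \ {v})).verts
    simpa [← Set.ncard_eq_toFinset_card'] using hmatch.even_card
  rw [← Set.ncard_sdiff_singleton_add_one hv]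
  exact heven.add_one

end Blocks

/-- Every connected graph of odd order `n ≥ 3` that does not belong to the family `B`
(of connected graphs in which every block is a complete graph of odd order)
contains a proper 1-perfect forest. -/
theorem proper_one_perfect_forest_of_not_in_B {V : Type*} [Fintype V]
    (G : SimpleGraph V) (hG : G.Connected) (hodd : Odd (Fintype.card V))
    (h3 : 3 ≤ Fintype.card V) (hB : ¬ InFamilyB G) :
    ∃ F : SimpleGraph V, IsSemiperfectForest G F ∧
      (∃! v : V, Even (fdeg F v)) ∧ ∀ v : V, 0 < fdeg F v := by
  by_contra hforest
  have hmin (y : V) : ∃ F, IsMinOddExcept G F y := by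
    obtain ⟨F, v, hF⟩ := exists_isMinOddExcept hG hodd
    obtain ⟨p⟩ := hG.preconnected v y
    obtain ⟨F', hF', -⟩ := hF.exists_of_walk hforest p
    exact ⟨F', hF'⟩
  refine hB ⟨hG, fun s hs => ?_⟩
  have hclique : G.IsClique s := by
    refine isClique_of_preconnected_induce_sdiff hs.1.preconnected hs.2.1
      fun y x z hyx hyz hxz p hp => ?_
    obtain ⟨F, hF⟩ := hmin y
    exact hF.adj_of_walk_avoiding hforest hyx hyz hxz p hp
  obtain ⟨v, hv⟩ := hs.1.nonempty
  obtain ⟨F, hF⟩ := hmin v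
  exact ⟨fun x hx y hy hxy => hclique hx hy hxy, hs.odd_ncard hclique hforest hv hF⟩
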